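/- Let λ* > 0 be a real and let k be a positive integer. Suppose (i) there exists a rooted tour cover (with any number of tours) whose maximum tour weight is at most λ*, and (ii) F is a forest in the complete graph G on V whose vertex set covers V, such that every edge of F has weight at most λ*, exactly n_LT trees of F have weight strictly less than λ*, every other tree of F has weight at least λ*, and the total weight of the trees of weight at least λ* is at most (k − n_LT)·λ*. Then there exists a rooted tour cover with at most k tours whose maximum tour weight is at most 5λ*. -/

import Mathlib

/-!
Every vertex lies on a closed walk of weight at most `λ*` through a depot, so a round trip from it
to that depot costs at most `λ*`. A tree of weight less than `2λ*`, doubled and joined to a depot at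
its root, therefore gives a tour of weight at most `5λ*`. A tree of weight at least `2λ*` can be
cut, at an edge or a vertex, into a piece of weight less than `2λ*` and a remainder that is lighter
than the tree by at least `λ*`; hence a tree of weight `W` is covered by at most `max 1 ⌊W / λ*⌋`
such pieces. Summed over the forest this count is at most `n_LT + (k - n_LT) = k`.
-/

/-- The weight of a walk, given as the list of its vertices in order: the sum
of the weights of its consecutive pairs (with multiplicity). -/
def walkWeight {V : Type} (w : V → V → ℝ) (p : List V) : ℝ :=
  ((p.zip p.tail).map fun q => w q.1 q.2).sum

/-- `p` is a closed walk (in the complete graph) starting and ending at `d`. -/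
def IsClosedWalkAt {V : Type} (p : List V) (d : V) : Prop :=
  p ≠ [] ∧ p.head? = some d ∧ p.getLast? = some d ∧ p.Chain' (· ≠ ·)

/-- The total edge weight of a subgraph of the complete graph on `V`. -/
noncomputable def subWeight {V : Type} [Fintype V] (wE : Sym2 V → ℝ)
    (H : (⊤ : SimpleGraph V).Subgraph) : ℝ :=
  ∑ e ∈ H.edgeSet.toFinite.toFinset, wE e

section Destutter

variable {V : Type*}

theorem head?_destutter' (R : V → V → Prop) [DecidableRel R] (a : V) :
    ∀ l : List V, (l.destutter' R a).head? = some a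
  | [] => rfl
  | b :: l => by
    by_cases hab : R a b
    · rw [List.destutter'_cons_pos l hab, List.head?_cons]
    · rw [List.destutter'_cons_neg l hab, head?_destutter' R a l]

theorem head?_destutter (R : V → V → Prop) [DecidableRel R] :
    ∀ l : List V, (l.destutter R).head? = l.head?
  | [] => rfl
  | a :: l => head?_destutter' R a l

variable [DecidableEq V]

theorem destutter_ne_cons_self (a : V) (l : List V) :
    (a :: a :: l).destutter (· ≠ ·) = (a :: l).destutter (· ≠ ·) := by
  simp [List.destutter_cons']

theorem destutter_ne_cons_of_ne {a b : V} (h : a ≠ b) (l : List V) :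
    (a :: b :: l).destutter (· ≠ ·) = a :: (b :: l).destutter (· ≠ ·) := by
  simp [List.destutter_cons', h]

theorem getLast?_destutter_ne : ∀ l : List V, (l.destutter (· ≠ ·)).getLast? = l.getLast?
  | [] => rfl
  | [_] => rfl
  | a :: b :: l => by
    have ih := getLast?_destutter_ne (b :: l)
    rcases eq_or_ne a b with rfl | hab
    · rw [destutter_ne_cons_self, ih, List.getLast?_cons_cons]
    · rw [destutter_ne_cons_of_ne hab, List.getLast?_cons, ih, ← List.getLast?_cons]

theorem mem_destutter_ne {v : V} : ∀ {l : List V}, v ∈ l.destutter (· ≠ ·) ↔ v ∈ l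
  | [] => Iff.rfl
  | [_] => Iff.rfl
  | a :: b :: l => by
    have ih := mem_destutter_ne (v := v) (l := b :: l)
    rcases eq_or_ne a b with rfl | hab
    · rw [destutter_ne_cons_self, ih, List.mem_cons, List.mem_cons, List.mem_cons, or_self_left]
    · rw [destutter_ne_cons_of_ne hab, List.mem_cons, ih, ← List.mem_cons]

end Destutter

section WalkWeight

variable {V : Type} {w : V → V → ℝ}

@[simp]
theorem walkWeight_singleton (x : V) : walkWeight w [x] = 0 := by
  simp [walkWeight]

theorem walkWeight_cons_cons (x y : V) (l : List V) :
    walkWeight w (x :: y :: l) = w x y + walkWeight w (y :: l) := by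
  simp [walkWeight]

theorem walkWeight_cons {x y : V} {l : List V} (hl : l.head? = some y) :
    walkWeight w (x :: l) = w x y + walkWeight w l := by
  obtain ⟨m, rfl⟩ := List.head?_eq_some_iff.1 hl
  exact walkWeight_cons_cons x y m

theorem walkWeight_append_cons (v : V) (m : List V) :
    ∀ l : List V, walkWeight w (l ++ v :: m) = walkWeight w (l ++ [v]) + walkWeight w (v :: m)
  | [] => by simp
  | [x] => by simp [walkWeight_cons_cons]
  | x :: y :: l => by
    have ih := walkWeight_append_cons v m (y :: l)
    simp only [List.cons_append, walkWeight_cons_cons] at ih ⊢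
    rw [ih, add_assoc]

theorem walkWeight_concat {x y : V} {l : List V} (hl : l.getLast? = some x) :
    walkWeight w (l ++ [y]) = walkWeight w l + w x y := by
  obtain ⟨m, rfl⟩ := List.getLast?_eq_some_iff.1 hl
  rw [List.append_assoc, List.singleton_append, walkWeight_append_cons, walkWeight_cons_cons,
    walkWeight_singleton, add_zero]

theorem walkWeight_append {x y : V} {l m : List V} (hl : l.getLast? = some x)
    (hm : m.head? = some y) :
    walkWeight w (l ++ m) = walkWeight w l + w x y + walkWeight w m := by
  obtain ⟨m, rfl⟩ := List.head?_eq_some_iff.1 hm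
  rw [walkWeight_append_cons, walkWeight_concat hl]

theorem walkWeight_destutter_ne [DecidableEq V] (hzero : ∀ v, w v v = 0) :
    ∀ l : List V, walkWeight w (l.destutter (· ≠ ·)) = walkWeight w l
  | [] => rfl
  | [_] => rfl
  | a :: b :: l => by
    have ih := walkWeight_destutter_ne hzero (b :: l)
    rcases eq_or_ne a b with rfl | hab
    · rw [destutter_ne_cons_self, ih, walkWeight_cons_cons, hzero, zero_add]
    · have hhead : ((b :: l).destutter (· ≠ ·)).head? = some b := head?_destutter _ _
      rw [destutter_ne_cons_of_ne hab, walkWeight_cons hhead, ih, walkWeight_cons_cons]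

theorem le_walkWeight_of_ends (hzero : ∀ v, w v v = 0)
    (htri : ∀ u v x, w u x ≤ w u v + w v x) {e : V} :
    ∀ {d : V} {l : List V}, l.head? = some d → l.getLast? = some e → w d e ≤ walkWeight w l
  | d, [x], hd, he => by
    obtain rfl : x = d := by simpa using hd
    obtain rfl : x = e := by simpa using he
    simp [hzero]
  | d, x :: y :: l, hd, he => by
    obtain rfl : x = d := by simpa using hd
    have hrest : w y e ≤ walkWeight w (y :: l) :=
      le_walkWeight_of_ends hzero htri rfl (List.getLast?_cons_cons.symm.trans he)
    rw [walkWeight_cons_cons]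
    linarith [htri x y e]

theorem round_trip_le_walkWeight (hzero : ∀ v, w v v = 0)
    (htri : ∀ u v x, w u x ≤ w u v + w v x) {p : List V} {d v : V} (hp : IsClosedWalkAt p d)
    (hv : v ∈ p) : w d v + w v d ≤ walkWeight w p := by
  obtain ⟨-, hhead, hlast, -⟩ := hp
  obtain ⟨l, m, rfl⟩ := List.append_of_mem hv
  have hto : w d v ≤ walkWeight w (l ++ [v]) :=
    le_walkWeight_of_ends hzero htri (by simpa using hhead) (by simp)
  have hback : w v d ≤ walkWeight w (v :: m) :=
    le_walkWeight_of_ends hzero htri rfl (by simpa using hlast)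
  rw [walkWeight_append_cons]
  exact add_le_add hto hback

end WalkWeight

/-- A nonempty rooted tree with vertices labelled by `V`, for cutting and doubling the trees of a
forest: `graft a b` hangs `b` below the root of `a` by an edge joining the two roots. Labels may be
repeated. -/
inductive GraftTree (V : Type*) where
  | single (v : V) : GraftTree V
  | graft (a b : GraftTree V) : GraftTree V

namespace GraftTree

section Graph

variable {V : Type*}

/-- The root of a tree; grafting keeps the root of the first tree. -/
def root : GraftTree V → V
  | single v => v
  | graft a _ => a.root

/-- The set of vertices of a tree. -/
def verts : GraftTree V → Set V
  | single v => {v}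
  | graft a b => a.verts ∪ b.verts

/-- The edges of a tree, a multiset since labels may be repeated. -/
def edges : GraftTree V → Multiset (Sym2 V)
  | single _ => 0
  | graft a b => s(a.root, b.root) ::ₘ (a.edges + b.edges)

/-- The total cost of the edges of a tree, counted with multiplicity. -/
def weight (c : Sym2 V → ℝ) (t : GraftTree V) : ℝ :=
  (t.edges.map c).sum

/-- The closed walk of a depth-first traversal of a tree, which uses each edge once in either
direction. -/
def tour : GraftTree V → List V
  | single v => [v]
  | graft a b => a.root :: (b.tour ++ a.tour)

/-- The tree `t` is a subtree of the graph `H`; since no edge of `t` is repeated, its weight is at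
most that of `H`. -/
structure IsSubtreeOf {G : SimpleGraph V} (t : GraftTree V) (H : G.Subgraph) : Prop where
  verts_subset : t.verts ⊆ H.verts
  nodup_edges : t.edges.Nodup
  edges_subset : ∀ e ∈ t.edges, e ∈ H.edgeSet

theorem root_mem_verts : ∀ t : GraftTree V, t.root ∈ t.verts
  | single v => Set.mem_singleton v
  | graft a _ => Or.inl a.root_mem_verts

theorem mem_verts_of_mem_edges {e : Sym2 V} {v : V} (hv : v ∈ e) :
    ∀ {t : GraftTree V}, e ∈ t.edges → v ∈ t.verts
  | graft a b, he => by
    simp only [edges, Multiset.mem_cons, Multiset.mem_add] at he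
    rcases he with rfl | he | he
    · rcases Sym2.mem_iff.1 hv with rfl | rfl
      · exact Or.inl a.root_mem_verts
      · exact Or.inr b.root_mem_verts
    · exact Or.inl (mem_verts_of_mem_edges hv he)
    · exact Or.inr (mem_verts_of_mem_edges hv he)

theorem exists_insert_leaf {u : V} (v : V) :
    ∀ {t : GraftTree V}, u ∈ t.verts → ∃ t' : GraftTree V,
      t'.root = t.root ∧ t'.verts = insert v t.verts ∧ t'.edges = s(u, v) ::ₘ t.edges
  | single x, hu => by
    obtain rfl : u = x := hu
    exact ⟨graft (single u) (single v), rfl, Set.pair_comm u v, by simp [edges, root]⟩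
  | graft a b, Or.inl hu => by
    obtain ⟨t, hroot, hverts, hedges⟩ := exists_insert_leaf v hu
    refine ⟨graft t b, hroot, ?_, ?_⟩
    · rw [verts, hverts, Set.insert_union, verts]
    · rw [edges, hroot, hedges, Multiset.cons_add, Multiset.cons_swap, edges]
  | graft a b, Or.inr hu => by
    obtain ⟨t, hroot, hverts, hedges⟩ := exists_insert_leaf v hu
    refine ⟨graft a t, rfl, ?_, ?_⟩
    · rw [verts, hverts, Set.union_insert, verts]
    · rw [edges, hroot, hedges, Multiset.add_cons, Multiset.cons_swap, edges]

theorem IsSubtreeOf.exists_insert {G : SimpleGraph V} {H : G.Subgraph} (hH : H.Connected)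
    {t : GraftTree V} (ht : t.IsSubtreeOf H) (hne : t.verts ≠ H.verts) :
    ∃ v ∉ t.verts, ∃ t' : GraftTree V, t'.IsSubtreeOf H ∧ t'.verts = insert v t.verts := by
  obtain ⟨x, hx, hxt⟩ := Set.exists_of_ssubset (ht.verts_subset.ssubset_of_ne hne)
  obtain ⟨p⟩ := hH.coe.preconnected ⟨t.root, ht.verts_subset t.root_mem_verts⟩ ⟨x, hx⟩
  obtain ⟨⟨⟨⟨u, _⟩, v, hv⟩, huv⟩, -, hut, hvt⟩ :=
    p.exists_boundary_dart {y | y.1 ∈ t.verts} t.root_mem_verts hxt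
  obtain ⟨t', -, hverts, hedges⟩ := exists_insert_leaf v hut
  refine ⟨v, hvt, t', ⟨?_, ?_, ?_⟩, hverts⟩
  · exact hverts ▸ Set.insert_subset hv ht.verts_subset
  · rw [hedges, Multiset.nodup_cons]
    exact ⟨fun h => hvt (mem_verts_of_mem_edges (Sym2.mem_mk_right u v) h), ht.nodup_edges⟩
  · rw [hedges, Multiset.forall_mem_cons]
    exact ⟨huv, ht.edges_subset⟩

theorem exists_spanning {G : SimpleGraph V} {H : G.Subgraph} (hH : H.Connected)
    (hfin : H.verts.Finite) : ∃ t : GraftTree V, t.IsSubtreeOf H ∧ t.verts = H.verts := by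
  let 𝒮 : Set (Set V) := {S | ∃ t : GraftTree V, t.IsSubtreeOf H ∧ t.verts = S}
  have h𝒮_fin : 𝒮.Finite := hfin.finite_subsets.subset fun _ ⟨_, ht, hS⟩ => hS ▸ ht.verts_subset
  obtain ⟨v, hv⟩ := hH.nonempty
  have h𝒮_single : {v} ∈ 𝒮 :=
    ⟨single v, ⟨Set.singleton_subset_iff.2 hv, Multiset.nodup_zero, by simp [edges]⟩, rfl⟩
  obtain ⟨_, ⟨t, ht, rfl⟩, hmax⟩ := h𝒮_fin.exists_maximal ⟨_, h𝒮_single⟩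
  refine ⟨t, ht, of_not_not fun hne => ?_⟩
  obtain ⟨u, hu, t', ht', hverts⟩ := ht.exists_insert hH hne
  exact hu (hmax ⟨t', ht', hverts⟩ (Set.subset_insert u _) (Set.mem_insert u _))

end Graph

section Cutting

variable {V : Type*} {c : Sym2 V → ℝ}

@[simp]
theorem weight_single (v : V) : (single v).weight c = 0 := rfl

theorem weight_graft (a b : GraftTree V) :
    (graft a b).weight c = a.weight c + b.weight c + c s(a.root, b.root) := by
  simp only [weight, edges, Multiset.map_cons, Multiset.map_add, Multiset.sum_cons,
    Multiset.sum_add]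
  ring

/-- The remainder keeps the root so that it can be put back in place of the subtree it was cut
from. At a graft of two trees lighter than `2β`, either the lower tree with its joining edge weighs
at least `β` and is cut off, or the upper tree does and is replaced by its root. -/
theorem exists_cut {β : ℝ} (hβ : 0 < β) :
    ∀ t : GraftTree V, 2 * β ≤ t.weight c → ∃ p r : GraftTree V, p.weight c < 2 * β ∧
      r.weight c + β ≤ t.weight c ∧ r.root = t.root ∧ t.verts ⊆ p.verts ∪ r.verts
  | single v, ht => by
    rw [weight_single] at ht
    linarith
  | graft a b, ht => by
    rw [weight_graft] at ht ⊢
    rcases le_or_gt (2 * β) (b.weight c) with hb | hb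
    · obtain ⟨p, r, hp, hr, hroot, hcover⟩ := exists_cut hβ b hb
      refine ⟨p, graft a r, hp, ?_, rfl, ?_⟩
      · rw [weight_graft, hroot]
        linarith
      · simp only [verts]
        tauto_set
    rcases le_or_gt (2 * β) (a.weight c) with ha | ha
    · obtain ⟨p, r, hp, hr, hroot, hcover⟩ := exists_cut hβ a ha
      refine ⟨p, graft r b, hp, ?_, hroot, ?_⟩
      · rw [weight_graft, hroot]
        linarith
      · simp only [verts]
        tauto_set
    rcases le_or_gt β (b.weight c + c s(a.root, b.root)) with hlower | hlower
    · exact ⟨b, a, hb, by linarith, rfl, (Set.union_comm _ _).subset⟩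
    · refine ⟨a, graft (single a.root) b, ha, ?_, rfl, ?_⟩
      · rw [weight_graft, weight_single, root]
        linarith
      · exact Set.union_subset_union_right _ Set.subset_union_right

theorem exists_cover_of_weight_lt {β : ℝ} (hβ : 0 < β) :
    ∀ (n : ℕ) (t : GraftTree V), t.weight c < (n + 2) * β → ∃ L : List (GraftTree V),
      L.length ≤ n + 1 ∧ (∀ p ∈ L, p.weight c < 2 * β) ∧ ∀ v ∈ t.verts, ∃ p ∈ L, v ∈ p.verts
  | 0, t, ht => ⟨[t], le_rfl, by simpa using ht, by simp⟩
  | n + 1, t, ht => by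
    rcases lt_or_ge (t.weight c) (2 * β) with hlight | hheavy
    · exact ⟨[t], by simp, by simpa using hlight, by simp⟩
    obtain ⟨p, r, hp, hr, -, hcover⟩ := exists_cut hβ t hheavy
    push_cast at ht
    obtain ⟨L, hlen, hweight, hL⟩ := exists_cover_of_weight_lt hβ n r (by linarith)
    refine ⟨p :: L, by simpa using hlen, List.forall_mem_cons.2 ⟨hp, hweight⟩, fun v hv => ?_⟩
    exact (List.exists_mem_cons_iff _ _ _).2 ((hcover hv).imp_right (hL v))

theorem exists_cover {β W : ℝ} (hβ : 0 < β) {t : GraftTree V} (ht : t.weight c ≤ W) :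
    ∃ L : List (GraftTree V), L.length ≤ max 1 ⌊W / β⌋₊ ∧ (∀ p ∈ L, p.weight c < 2 * β) ∧
      ∀ v ∈ t.verts, ∃ p ∈ L, v ∈ p.verts := by
  have hpred : max 1 ⌊W / β⌋₊ = ⌊W / β⌋₊ - 1 + 1 := by lia
  rw [hpred]
  refine exists_cover_of_weight_lt hβ _ t (ht.trans_lt ((div_lt_iff₀ hβ).1 ?_))
  calc W / β < (⌊W / β⌋₊ + 1 : ℕ) := mod_cast Nat.lt_floor_add_one _
    _ ≤ (⌊W / β⌋₊ - 1 + 2 : ℕ) := mod_cast by lia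
    _ = _ := by push_cast; rfl

end Cutting

section Weight

variable {V : Type} {w : V → V → ℝ} {c : Sym2 V → ℝ}

theorem IsSubtreeOf.weight_le_subWeight [Fintype V] (hc : ∀ e, 0 ≤ c e)
    {H : (⊤ : SimpleGraph V).Subgraph} {t : GraftTree V} (ht : t.IsSubtreeOf H) :
    t.weight c ≤ subWeight c H :=
  Finset.sum_le_sum_of_subset_of_nonneg (s := ⟨t.edges, ht.nodup_edges⟩)
    (fun e he => (Set.Finite.mem_toFinset _).2 (ht.edges_subset e he)) fun e _ _ => hc e

theorem head?_tour : ∀ t : GraftTree V, t.tour.head? = some t.root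
  | single _ => rfl
  | graft _ _ => rfl

theorem getLast?_tour : ∀ t : GraftTree V, t.tour.getLast? = some t.root
  | single _ => rfl
  | graft a b => by
    simp [tour, root, List.getLast?_cons, List.getLast?_append, a.getLast?_tour]

theorem mem_tour_of_mem_verts {v : V} : ∀ {t : GraftTree V}, v ∈ t.verts → v ∈ t.tour
  | single _, hv => List.mem_singleton.2 hv
  | graft _ _, Or.inl hv =>
    List.mem_cons_of_mem _ (List.mem_append_right _ (mem_tour_of_mem_verts hv))
  | graft _ _, Or.inr hv =>
    List.mem_cons_of_mem _ (List.mem_append_left _ (mem_tour_of_mem_verts hv))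

theorem walkWeight_tour (hw : ∀ u v, w u v = c s(u, v)) :
    ∀ t : GraftTree V, walkWeight w t.tour = 2 * t.weight c
  | single v => by simp [tour]
  | graft a b => by
    have hhead : (b.tour ++ a.tour).head? = some b.root := by
      rw [List.head?_append, b.head?_tour, Option.some_or]
    rw [tour, walkWeight_cons hhead, walkWeight_append b.getLast?_tour a.head?_tour,
      walkWeight_tour hw a, walkWeight_tour hw b, weight_graft, hw, hw, Sym2.eq_swap]
    ring

theorem exists_closedWalkAt (hzero : ∀ v, w v v = 0) (hw : ∀ u v, w u v = c s(u, v))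
    (d : V) (t : GraftTree V) :
    ∃ p : List V, IsClosedWalkAt p d ∧ (∀ v ∈ t.verts, v ∈ p) ∧
      walkWeight w p = w d t.root + w t.root d + 2 * t.weight c := by
  classical
  let p := d :: (t.tour ++ [d])
  have hhead : (t.tour ++ [d]).head? = some t.root := by
    rw [List.head?_append, t.head?_tour, Option.some_or]
  refine ⟨p.destutter (· ≠ ·), ⟨?_, ?_, ?_, List.isChain_destutter _ p⟩, fun v hv => ?_, ?_⟩
  · exact mt (List.destutter_eq_nil _).1 (List.cons_ne_nil _ _)
  · exact head?_destutter _ p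
  · exact (getLast?_destutter_ne p).trans (List.getLast?_concat (l := d :: t.tour))
  · have hv' : v ∈ t.tour := mem_tour_of_mem_verts hv
    exact mem_destutter_ne.2 (List.mem_cons_of_mem _ (List.mem_append_left _ hv'))
  · rw [walkWeight_destutter_ne hzero, walkWeight_cons hhead, walkWeight_concat t.getLast?_tour,
      walkWeight_tour hw]
    ring

theorem exists_closedWalkAt_of_root_mem (hzero : ∀ v, w v v = 0)
    (htri : ∀ u v x, w u x ≤ w u v + w v x) (hw : ∀ u v, w u v = c s(u, v)) {l : List V} {d : V}
    (hl : IsClosedWalkAt l d) {t : GraftTree V} (ht : t.root ∈ l) :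
    ∃ p : List V, IsClosedWalkAt p d ∧ (∀ v ∈ t.verts, v ∈ p) ∧
      walkWeight w p ≤ walkWeight w l + 2 * t.weight c := by
  obtain ⟨p, hp, hverts, hpw⟩ := t.exists_closedWalkAt hzero hw d
  exact ⟨p, hp, hverts, by linarith [round_trip_le_walkWeight hzero htri hl ht]⟩

theorem exists_cover_of_connected [Fintype V] (hc : ∀ e, 0 ≤ c e) {β : ℝ} (hβ : 0 < β)
    {H : (⊤ : SimpleGraph V).Subgraph} (hH : H.Connected) :
    ∃ L : List (GraftTree V), L.length ≤ max 1 ⌊subWeight c H / β⌋₊ ∧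
      (∀ p ∈ L, p.weight c < 2 * β) ∧ ∀ v ∈ H.verts, ∃ p ∈ L, v ∈ p.verts := by
  obtain ⟨t, ht, hverts⟩ := exists_spanning hH H.verts.toFinite
  rw [← hverts]
  exact exists_cover hβ (ht.weight_le_subWeight hc)

end Weight

end GraftTree

theorem sum_max_one_floor_div_le {κ : Type*} [Fintype κ] (W : κ → ℝ) {β : ℝ} (hβ : 0 < β) :
    ((∑ i, max 1 ⌊W i / β⌋₊ : ℕ) : ℝ) ≤
      (Finset.univ.filter fun i => W i < β).card +
        (∑ i ∈ Finset.univ.filter (fun i => β ≤ W i), W i) / β := by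
  have hterm (i : κ) : ((max 1 ⌊W i / β⌋₊ : ℕ) : ℝ) ≤ if W i < β then 1 else W i / β := by
    split_ifs with hi
    · have : ⌊W i / β⌋₊ = 0 := Nat.floor_eq_zero.2 ((div_lt_one hβ).2 hi)
      simp [this]
    · have hone : 1 ≤ W i / β := (one_le_div hβ).2 (not_lt.1 hi)
      rw [Nat.cast_max, Nat.cast_one]
      exact max_le hone (Nat.floor_le (zero_le_one.trans hone))
  calc ((∑ i, max 1 ⌊W i / β⌋₊ : ℕ) : ℝ)
      ≤ ∑ i, if W i < β then 1 else W i / β := by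
        rw [Nat.cast_sum]
        exact Finset.sum_le_sum fun i _ => hterm i
    _ = _ := by simp only [Finset.sum_ite, Finset.sum_const, nsmul_one, not_lt, Finset.sum_div]

theorem exists_graftTree_cover {V : Type} [Fintype V] {c : Sym2 V → ℝ} (hc : ∀ e, 0 ≤ c e) {β : ℝ}
    (hβ : 0 < β) {κ : Type*} [Fintype κ] {T : κ → (⊤ : SimpleGraph V).Subgraph}
    (hconn : ∀ i, (T i).Connected) (hcov : ∀ v, ∃ i, v ∈ (T i).verts) :
    ∃ M : List (GraftTree V), M.length ≤ ∑ i, max 1 ⌊subWeight c (T i) / β⌋₊ ∧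
      (∀ p ∈ M, p.weight c < 2 * β) ∧ ∀ v, ∃ p ∈ M, v ∈ p.verts := by
  choose L hlen hweight hcover using fun i => GraftTree.exists_cover_of_connected hc hβ (hconn i)
  refine ⟨Finset.univ.toList.flatMap L, ?_, fun p hp => ?_, fun v => ?_⟩
  · rw [List.length_flatMap, Finset.sum_map_toList]
    exact Finset.sum_le_sum fun i _ => hlen i
  · obtain ⟨i, -, hi⟩ := List.mem_flatMap.1 hp
    exact hweight i p hi
  · obtain ⟨i, hi⟩ := hcov v
    obtain ⟨p, hp, hv⟩ := hcover i v hi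
    exact ⟨p, List.mem_flatMap.2 ⟨i, Finset.mem_toList.2 (Finset.mem_univ i), hp⟩, hv⟩

theorem stmt14_general {V : Type} [Fintype V] (w : V → V → ℝ)
    (hzero : ∀ v, w v v = 0)
    (hnonneg : ∀ u v, 0 ≤ w u v)
    (hsymm : ∀ u v, w u v = w v u)
    (htri : ∀ u v x, w u x ≤ w u v + w v x)
    (D : Set V) (lamstar : ℝ) (hpos : 0 < lamstar) (k nLT : ℕ)
    {ι : Type*} (opt : ι → List V)
    (hoptclosed : ∀ i, ∃ d ∈ D, IsClosedWalkAt (opt i) d)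
    (hoptcov : ∀ v : V, ∃ i, v ∈ opt i)
    (hoptwt : ∀ i, walkWeight w (opt i) ≤ lamstar)
    {κ : Type*} [Fintype κ] (T : κ → (⊤ : SimpleGraph V).Subgraph)
    (hconn : ∀ i, (T i).Connected)
    (hcov : ∀ v : V, ∃ i, v ∈ (T i).verts)
    (hlight : (Finset.univ.filter
        (fun i => subWeight (Sym2.lift ⟨w, hsymm⟩) (T i) < lamstar)).card = nLT)
    (hheavy : ∑ i ∈ Finset.univ.filter
          (fun i => lamstar ≤ subWeight (Sym2.lift ⟨w, hsymm⟩) (T i)),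
        subWeight (Sym2.lift ⟨w, hsymm⟩) (T i) ≤ ((k : ℝ) - (nLT : ℝ)) * lamstar) :
    ∃ (q' : ℕ) (_ : q' ≤ k) (tours : Fin q' → List V),
      (∀ i, ∃ d ∈ D, IsClosedWalkAt (tours i) d) ∧
      (∀ v : V, ∃ i, v ∈ tours i) ∧
      (∀ i, walkWeight w (tours i) ≤ 5 * lamstar) := by
  let c : Sym2 V → ℝ := Sym2.lift ⟨w, hsymm⟩
  have hc : ∀ e, 0 ≤ c e := Sym2.ind hnonneg
  obtain ⟨M, hlen, hweight, hcover⟩ := exists_graftTree_cover hc hpos hconn hcov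
  have hcount : M.length ≤ k := by
    have hbudget := (div_le_iff₀ hpos).2 hheavy
    have hsum := sum_max_one_floor_div_le (fun i => subWeight c (T i)) hpos
    rw [hlight] at hsum
    exact Nat.cast_le.1 ((Nat.cast_le.2 hlen).trans (hsum.trans (by linarith)))
  have htour (t : GraftTree V) : ∃ d ∈ D, ∃ p, IsClosedWalkAt p d ∧ (∀ v ∈ t.verts, v ∈ p) ∧
      walkWeight w p ≤ lamstar + 2 * t.weight c := by
    obtain ⟨i, hi⟩ := hoptcov t.root
    obtain ⟨d, hd, hclosed⟩ := hoptclosed i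
    obtain ⟨p, hp, hverts, hpw⟩ :=
      GraftTree.exists_closedWalkAt_of_root_mem hzero htri (c := c) (fun _ _ => rfl) hclosed hi
    exact ⟨d, hd, p, hp, hverts, by linarith [hoptwt i]⟩
  choose depot hdepot tour hclosed hverts hle using htour
  refine ⟨M.length, hcount, fun j => tour M[j], fun j => ⟨_, hdepot _, hclosed _⟩, fun v => ?_,
    fun j => by linarith [hle M[j], hweight M[j] (List.getElem_mem _)]⟩
  obtain ⟨p, hp, hv⟩ := hcover v
  obtain ⟨j, rfl⟩ := List.get_of_mem hp
  exact ⟨j, hverts _ v hv⟩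

/-- non-algorithmic core of the paper's Theorem 1, with
`λ = λ*`: let `λ* > 0` and `k ≥ 1`.  Suppose (i) there is a rooted tour cover
(with any number of tours) of maximum tour weight at most `λ*`, and (ii) `F`
is a forest (given by its pairwise vertex-disjoint trees) covering `V`, with
all edges of weight at most `λ*`, exactly `n_LT` trees of weight `< λ*`, all
other trees of weight `≥ λ*`, and total weight of the trees of weight `≥ λ*`
at most `(k − n_LT) λ*`.  Then there is a rooted tour cover with at most `k`
tours of maximum tour weight at most `5λ*`. -/
theorem stmt14 {V : Type} [Fintype V] [DecidableEq V]
    (w : V → V → ℝ)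
    (hzero : ∀ v, w v v = 0)
    (hnonneg : ∀ u v, 0 ≤ w u v)
    (hsymm : ∀ u v, w u v = w v u)
    (htri : ∀ u v x, w u x ≤ w u v + w v x)
    (D : Finset V) (hD : D.Nonempty)
    (lamstar : ℝ) (hpos : 0 < lamstar)
    (k : ℕ) (hk : 0 < k) (nLT : ℕ)
    (ι : Type) (opt : ι → List V)
    (hoptclosed : ∀ i, ∃ d ∈ D, IsClosedWalkAt (opt i) d)
    (hoptcov : ∀ v : V, ∃ i, v ∈ opt i)
    (hoptwt : ∀ i, walkWeight w (opt i) ≤ lamstar)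
    (q : ℕ) (T : Fin q → (⊤ : SimpleGraph V).Subgraph)
    (hconn : ∀ i, (T i).Connected)
    (hacyc : ∀ i, (T i).coe.IsAcyclic)
    (hdisj : ∀ i j, i ≠ j → Disjoint (T i).verts (T j).verts)
    (hcov : ∀ v : V, ∃ i, v ∈ (T i).verts)
    (hedge : ∀ i, ∀ e ∈ (T i).edgeSet, Sym2.lift ⟨w, hsymm⟩ e ≤ lamstar)
    (hlight : (Finset.univ.filter
        (fun i => subWeight (Sym2.lift ⟨w, hsymm⟩) (T i) < lamstar)).card
      = nLT)
    (hheavy : ∑ i ∈ Finset.univ.filter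
          (fun i => lamstar ≤ subWeight (Sym2.lift ⟨w, hsymm⟩) (T i)),
        subWeight (Sym2.lift ⟨w, hsymm⟩) (T i)
      ≤ ((k : ℝ) - (nLT : ℝ)) * lamstar) :
    ∃ (q' : ℕ) (_ : q' ≤ k) (tours : Fin q' → List V),
      (∀ i, ∃ d ∈ D, IsClosedWalkAt (tours i) d) ∧
      (∀ v : V, ∃ i, v ∈ tours i) ∧
      (∀ i, walkWeight w (tours i) ≤ 5 * lamstar) := by
  exact stmt14_general w hzero hnonneg hsymm htri D lamstar hpos k nLT opt hoptclosed hoptcov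
    hoptwt T hconn hcov hlight hheavy
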